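/- Let (Ω, 𝓕, μ) be a probability space and T : Ω → Ω an invertible bimeasurable measure-preserving transformation. Suppose there exist sub-σ-algebras 𝓑 and 𝓒 of 𝓕 such that: (i) 𝓑 and 𝓒 are independent; (ii) 𝓒 is T-invariant, i.e. A ∈ 𝓒 if and only if T^{-1}A ∈ 𝓒; (iii) there is a 𝓑-measurable function g : Ω → {-1,0,1} with μ(g = 1) = μ(g = -1) = a/2 for some 0 < a ≤ 1, such that the family (g∘T^k)_{k∈ℤ} is independent and identically distributed and is independent of 𝓒; (iv) for every ε > 0, every N ∈ ℕ and every d ∈ (0,1) there exists A ∈ 𝓒 with μ(A) = d and μ(A Δ T^{-n}A) < ε d for all integers 1 ≤ n ≤ N. Then for every sequence (a_n)_{n≥0} of positive real numbers decreasing to 0 there exists a measurable function f : Ω → {-1,0,1} whose distribution is non-degenerate (f is not μ-almost surely constant) such that (f∘T^k)_{k≥0} is a strong martingale difference sequence, and there exists a strictly increasing sequence (n_k)_{k≥0} of positive integers such that for every k ≥ 0: μ(S_{n_k}(f) = 0) ≥ a_{n_k} and sup_{x∈ℝ} |F_{n_k}(f,x) − Φ(x)| ≥ a_{n_k}/2.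 -/

import Mathlib

open MeasureTheory ProbabilityTheory Set
open scoped ENNReal

/-- The standard normal distribution function `Φ`. -/
noncomputable def stdNormalCDF (x : ℝ) : ℝ :=
  (Real.sqrt (2 * Real.pi))⁻¹ * ∫ t in Set.Iic x, Real.exp (-t ^ 2 / 2)

/-- The partial sums `S_n(f) = Σ_{k=0}^{n-1} f ∘ T^k`. -/
noncomputable def partialSumMDS {Ω : Type*} (T : Ω → Ω) (f : Ω → ℝ) (n : ℕ) (ω : Ω) : ℝ :=
  ∑ k ∈ Finset.range n, f (T^[k] ω)

/-- `F_n(f,x) = μ(S_n(f) ≤ x σ √n)` where `σ² = ∫ f² dμ`. -/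
noncomputable def Fdist {Ω : Type*} [MeasurableSpace Ω] (μ : Measure Ω) (T : Ω → Ω)
    (f : Ω → ℝ) (n : ℕ) (x : ℝ) : ℝ :=
  (μ {ω | partialSumMDS T f n ω ≤ x * Real.sqrt (∫ ω, f ω ^ 2 ∂μ) * Real.sqrt n}).toReal

/-- `(f∘T^k)_{k≥0}` is a strong martingale difference sequence:
`E(f∘T^k | σ(f∘T^j : j ≥ 0, j ≠ k)) = 0` a.s. for every `k`. -/
def IsStrongMDS {Ω : Type*} [MeasurableSpace Ω] (μ : Measure Ω) (T : Ω → Ω)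
    (f : Ω → ℝ) : Prop :=
  ∀ k : ℕ,
    μ[(fun ω => f (T^[k] ω)) |
      ⨆ j ∈ {j : ℕ | j ≠ k}, MeasurableSpace.comap (fun ω => f (T^[j] ω))
        Real.measurableSpace] =ᵐ[μ] 0

/-- The `k`-th iterate (for `k : ℤ`) of an invertible transformation. -/
noncomputable def iterZ {α : Type*} (e : α ≃ α) : ℤ → α → α
  | Int.ofNat n => (⇑e)^[n]
  | Int.negSucc n => (⇑e.symm)^[n + 1]

/-- If `m₁ ⟂ m₂` and `m₁ ⊔ m₂ ⟂ m₃`, then `m₁ ⟂ m₂ ⊔ m₃`. -/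
lemma indep_sup_right_of_indep {Ω : Type*} [mΩ : MeasurableSpace Ω] {μ : Measure Ω}
    [IsProbabilityMeasure μ] {m₁ m₂ m₃ : MeasurableSpace Ω}
    (h₁ : m₁ ≤ mΩ) (h₂ : m₂ ≤ mΩ) (h₃ : m₃ ≤ mΩ)
    (h₁₂ : Indep m₁ m₂ μ) (h : Indep (m₁ ⊔ m₂) m₃ μ) : Indep m₁ (m₂ ⊔ m₃) μ := by
  let p : Set (Set Ω) := {u | ∃ s t, MeasurableSet[m₂] s ∧ MeasurableSet[m₃] t ∧ s ∩ t = u}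
  have hp : IsPiSystem p := by
    rintro _ ⟨s, t, hs, ht, rfl⟩ _ ⟨s', t', hs', ht', rfl⟩ -
    exact ⟨s ∩ s', t ∩ t', hs.inter hs', ht.inter ht', Set.inter_inter_inter_comm s s' t t'⟩
  have hgen : m₂ ⊔ m₃ = MeasurableSpace.generateFrom p := by
    apply le_antisymm
    · refine sup_le (fun s hs => ?_) (fun t ht => ?_)
      · exact MeasurableSpace.measurableSet_generateFrom
          ⟨s, univ, hs, MeasurableSet.univ, inter_univ s⟩
      · exact MeasurableSpace.measurableSet_generateFrom
          ⟨univ, t, MeasurableSet.univ, ht, univ_inter t⟩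
    · refine MeasurableSpace.generateFrom_le ?_
      rintro _ ⟨s, t, hs, ht, rfl⟩
      exact MeasurableSet.inter ((le_sup_left : m₂ ≤ m₂ ⊔ m₃) s hs)
        ((le_sup_right : m₃ ≤ m₂ ⊔ m₃) t ht)
  refine IndepSets.indep h₁ (sup_le h₂ h₃) (@MeasurableSpace.isPiSystem_measurableSet Ω m₁) hp
    (@MeasurableSpace.generateFrom_measurableSet Ω m₁).symm hgen ?_
  rw [IndepSets_iff]
  rintro r _ hr ⟨s, t, hs, ht, rfl⟩
  have hr' : MeasurableSet[m₁ ⊔ m₂] r := (le_sup_left : m₁ ≤ m₁ ⊔ m₂) r hr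
  have hs' : MeasurableSet[m₁ ⊔ m₂] s := (le_sup_right : m₂ ≤ m₁ ⊔ m₂) s hs
  rw [Indep_iff] at h h₁₂
  rw [← inter_assoc, h _ _ (hr'.inter hs') ht, h₁₂ _ _ hr hs, h _ _ hs' ht, mul_assoc]

/-- An integrable centred variable independent of a sub-σ-algebra, restricted to a set of this
σ-algebra, has vanishing conditional expectation given any coarser σ-algebra. -/
lemma condExp_indicator_ae_eq_zero_of_indep {Ω : Type*} [mΩ : MeasurableSpace Ω] {μ : Measure Ω}
    [IsProbabilityMeasure μ] {m₁ m₂ m₃ : MeasurableSpace Ω} (h₁ : m₁ ≤ mΩ) (h₂ : m₂ ≤ mΩ)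
    (h₃₂ : m₃ ≤ m₂) (h : Indep m₁ m₂ μ) {X : Ω → ℝ} (hX : Measurable[m₁] X)
    (hXi : Integrable X μ) (hX0 : ∫ ω, X ω ∂μ = 0) {A : Set Ω} (hA : MeasurableSet[m₂] A) :
    μ[A.indicator X | m₃] =ᵐ[μ] 0 := by
  have h0 : μ[A.indicator X | m₂] =ᵐ[μ] 0 := by
    filter_upwards [condExp_indicator hXi hA,
      condExp_indep_eq h₁ h₂ (Measurable.stronglyMeasurable hX) h] with ω hω hω'
    rw [hω]
    by_cases hmem : ω ∈ A
    · rw [indicator_of_mem hmem, hω', hX0]; rfl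
    · rw [indicator_of_notMem hmem]; rfl
  refine (condExp_condExp_of_le h₃₂ h₂).symm.trans ?_
  refine (condExp_congr_ae h0).trans ?_
  rw [condExp_zero]

/-- A set that is almost invariant under the first `n` iterates keeps at least half of its
measure when restricted to the points whose orbit stays in it during `n` steps. -/
lemma half_le_measure_iInter_preimage_iterate {Ω : Type*} [mΩ : MeasurableSpace Ω] {μ : Measure Ω}
    [IsProbabilityMeasure μ] {T : Ω → Ω} {A : Set Ω} {n : ℕ} (hn : 0 < n) {d : ℝ} (hd : 0 < d)
    (hA : μ A = ENNReal.ofReal d)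
    (h : ∀ j, 1 ≤ j → j ≤ n →
      μ (symmDiff A (T^[j] ⁻¹' A)) < ENNReal.ofReal (1 / (2 * n) * d)) :
    ENNReal.ofReal (d / 2) ≤ μ {ω | ∀ j < n, T^[j] ω ∈ A} := by
  have hsub : A ⊆ {ω | ∀ j < n, T^[j] ω ∈ A} ∪
      ⋃ j ∈ Finset.range n, symmDiff A (T^[j] ⁻¹' A) := by
    intro ω hω
    by_cases hI : ∀ j < n, T^[j] ω ∈ A
    · exact Or.inl hI
    · push Not at hI
      obtain ⟨j, hj, hjA⟩ := hI
      exact Or.inr (mem_biUnion (Finset.mem_range.2 hj) (Or.inl ⟨hω, hjA⟩))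
  have hsum : μ (⋃ j ∈ Finset.range n, symmDiff A (T^[j] ⁻¹' A)) ≤ ENNReal.ofReal (d / 2) := by
    calc _ ≤ ∑ j ∈ Finset.range n, μ (symmDiff A (T^[j] ⁻¹' A)) :=
          measure_biUnion_finset_le _ _
      _ ≤ ∑ _j ∈ Finset.range n, ENNReal.ofReal (1 / (2 * n) * d) := by
          refine Finset.sum_le_sum fun j hj => ?_
          rcases Nat.eq_zero_or_pos j with rfl | hj0
          · simp
          · exact (h j hj0 (Finset.mem_range.1 hj).le).le
      _ = ENNReal.ofReal (d / 2) := by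
          rw [Finset.sum_const, Finset.card_range, ← ENNReal.ofReal_nsmul, nsmul_eq_mul]
          congr 1
          field_simp
  have hle : ENNReal.ofReal (d / 2) + ENNReal.ofReal (d / 2) ≤
      μ {ω | ∀ j < n, T^[j] ω ∈ A} + ENNReal.ofReal (d / 2) := by
    rw [← ENNReal.ofReal_add (by positivity) (by positivity), add_halves, ← hA]
    exact (measure_mono hsub).trans ((measure_union_le _ _).trans (by gcongr))
  exact (ENNReal.add_le_add_iff_right ENNReal.ofReal_ne_top).1 hle

lemma integrable_exp_neg_sq_div_two : Integrable (fun t : ℝ => Real.exp (-t ^ 2 / 2)) := by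
  refine (integrable_exp_neg_mul_sq (b := 1 / 2) (by norm_num)).congr (.of_forall fun t => ?_)
  simp only
  ring_nf

lemma continuous_stdNormalCDF : Continuous stdNormalCDF := by
  refine continuous_const.mul ?_
  have h : (fun x : ℝ => ∫ t in Set.Iic x, Real.exp (-t ^ 2 / 2)) = fun x =>
      (∫ t in Set.Iic (0 : ℝ), Real.exp (-t ^ 2 / 2)) + ∫ t in (0 : ℝ)..x,
        Real.exp (-t ^ 2 / 2) := by
    funext x
    rw [← intervalIntegral.integral_Iic_sub_Iic integrable_exp_neg_sq_div_two.integrableOn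
      integrable_exp_neg_sq_div_two.integrableOn]
    ring
  rw [h]
  exact continuous_const.add (intervalIntegral.continuous_primitive
    (fun _ _ => integrable_exp_neg_sq_div_two.intervalIntegrable) 0)

lemma abs_stdNormalCDF_le (x : ℝ) :
    |stdNormalCDF x| ≤ (Real.sqrt (2 * Real.pi))⁻¹ * ∫ t, Real.exp (-t ^ 2 / 2) := by
  have h0 : 0 ≤ ∫ t in Set.Iic x, Real.exp (-t ^ 2 / 2) :=
    integral_nonneg fun _ => (Real.exp_pos _).le
  rw [stdNormalCDF, abs_of_nonneg (by positivity)]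
  exact mul_le_mul_of_nonneg_left (setIntegral_le_integral integrable_exp_neg_sq_div_two
    (.of_forall fun _ => (Real.exp_pos _).le)) (by positivity)

/-- An atom of mass at least `c` at `0` puts the distribution function of the normalized partial sum
at uniform distance at least `c / 2` from the continuous function `Φ`. -/
lemma half_le_iSup_abs_Fdist_sub {Ω : Type*} [mΩ : MeasurableSpace Ω] {μ : Measure Ω}
    [IsProbabilityMeasure μ] {T : Ω → Ω} {f : Ω → ℝ} {n : ℕ}
    (hS : Measurable (partialSumMDS T f n)) (hσ : 0 < ∫ ω, f ω ^ 2 ∂μ) (hn : 0 < n) {c : ℝ}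
    (hc : ENNReal.ofReal c ≤ μ {ω | partialSumMDS T f n ω = 0}) :
    c / 2 ≤ ⨆ x : ℝ, |Fdist μ T f n x - stdNormalCDF x| := by
  set M := ⨆ x : ℝ, |Fdist μ T f n x - stdNormalCDF x|
  have hF : ∀ x, |Fdist μ T f n x| ≤ 1 := fun x => by
    rw [Fdist, abs_of_nonneg ENNReal.toReal_nonneg]
    exact ENNReal.toReal_le_of_le_ofReal zero_le_one (by simpa using prob_le_one)
  have hbdd : BddAbove (range fun x : ℝ => |Fdist μ T f n x - stdNormalCDF x|) := by
    refine ⟨1 + (Real.sqrt (2 * Real.pi))⁻¹ * ∫ t, Real.exp (-t ^ 2 / 2), ?_⟩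
    rintro _ ⟨x, rfl⟩
    exact (abs_sub _ _).trans (add_le_add (hF x) (abs_stdNormalCDF_le x))
  have hM : ∀ x, |Fdist μ T f n x - stdNormalCDF x| ≤ M := fun x => le_ciSup hbdd x
  have hscale : 0 < Real.sqrt (∫ ω, f ω ^ 2 ∂μ) * Real.sqrt n := by positivity
  have hjump : ∀ x < 0, c ≤ Fdist μ T f n 0 - Fdist μ T f n x := by
    intro x hx
    have hx' : x * Real.sqrt (∫ ω, f ω ^ 2 ∂μ) * Real.sqrt n < 0 := by
      rw [mul_assoc]; exact mul_neg_of_neg_of_pos hx hscale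
    have hdisj : Disjoint
        {ω | partialSumMDS T f n ω ≤ x * Real.sqrt (∫ ω, f ω ^ 2 ∂μ) * Real.sqrt n}
        {ω | partialSumMDS T f n ω = 0} := by
      rw [Set.disjoint_left]
      intro ω h1 h2
      simp only [mem_ofPred_eq] at h1 h2
      linarith
    have hle : c ≤ (μ {ω | partialSumMDS T f n ω = 0}).toReal :=
      (ENNReal.ofReal_le_iff_le_toReal (measure_ne_top _ _)).1 hc
    have hsum := measure_union (μ := μ) hdisj (hS (measurableSet_singleton 0))
    have hmono : μ ({ω | partialSumMDS T f n ω ≤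
        x * Real.sqrt (∫ ω, f ω ^ 2 ∂μ) * Real.sqrt n} ∪ {ω | partialSumMDS T f n ω = 0}) ≤
        μ {ω | partialSumMDS T f n ω ≤ 0 * Real.sqrt (∫ ω, f ω ^ 2 ∂μ) * Real.sqrt n} := by
      refine measure_mono ?_
      rintro ω (h | h) <;> simp only [mem_ofPred_eq, zero_mul] at h ⊢ <;> linarith
    rw [hsum] at hmono
    have := ENNReal.toReal_mono (measure_ne_top _ _) hmono
    rw [ENNReal.toReal_add (measure_ne_top _ _) (measure_ne_top _ _)] at this
    simp only [Fdist]
    linarith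
  have hlim : Filter.Tendsto (fun x => c - (stdNormalCDF 0 - stdNormalCDF x))
      (nhdsWithin 0 (Set.Iio 0)) (nhds (c - (stdNormalCDF 0 - stdNormalCDF 0))) :=
    ((continuous_const.sub (continuous_const.sub continuous_stdNormalCDF)).tendsto
      0).mono_left nhdsWithin_le_nhds
  have h2M : c - (stdNormalCDF 0 - stdNormalCDF 0) ≤ 2 * M := by
    refine le_of_tendsto hlim ?_
    filter_upwards [self_mem_nhdsWithin] with x hx
    have h1 := (abs_le.1 (hM 0)).2
    have h2 := (abs_le.1 (hM x)).1
    have h3 := hjump x hx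
    linarith
  linarith

lemma measurable_iterZ {Ω : Type*} [mΩ : MeasurableSpace Ω] {T : Ω ≃ Ω} (hT : Measurable T)
    (hT' : Measurable T.symm) : ∀ k : ℤ, Measurable (iterZ T k)
  | Int.ofNat n => hT.iterate n
  | Int.negSucc n => hT'.iterate (n + 1)

/-- Sets of measure `2⁻², 2⁻³, …` cover at most half of the space. -/
lemma measure_iUnion_le_half {Ω : Type*} [mΩ : MeasurableSpace Ω] {μ : Measure Ω} {A : ℕ → Set Ω}
    (hA : ∀ k, μ (A k) = ENNReal.ofReal ((1 / 2 : ℝ) ^ (k + 2))) :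
    μ (⋃ k, A k) ≤ ENNReal.ofReal (1 / 2) := by
  have hs : HasSum (fun k : ℕ => (1 / 2 : ℝ) ^ (k + 2)) (1 / 2) := by
    have h := hasSum_geometric_two.mul_left (1 / 4 : ℝ)
    rw [show (1 / 4 : ℝ) * 2 = 1 / 2 by norm_num] at h
    simpa only [pow_add, mul_comm, show (1 / 2 : ℝ) ^ 2 = 1 / 4 by norm_num] using h
  calc μ (⋃ k, A k) ≤ ∑' k, μ (A k) := measure_iUnion_le _
    _ = ENNReal.ofReal (1 / 2) := by
      simp_rw [hA]
      rw [← ENNReal.ofReal_tsum_of_nonneg (fun k => by positivity) hs.summable, hs.tsum_eq]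

/-- A `{-1, 0, 1}`-valued function taking `1` and `-1` with the same probability is centred. -/
lemma integrable_and_integral_eq_zero_of_symmetric {Ω : Type*} [mΩ : MeasurableSpace Ω]
    {μ : Measure Ω} [IsProbabilityMeasure μ] {g : Ω → ℝ} (hg : Measurable g)
    (hval : ∀ ω, g ω ∈ ({-1, 0, 1} : Set ℝ)) (h : μ {ω | g ω = 1} = μ {ω | g ω = -1}) :
    Integrable g μ ∧ ∫ ω, g ω ∂μ = 0 := by
  have h1 : MeasurableSet {ω | g ω = 1} := hg (measurableSet_singleton 1)
  have h2 : MeasurableSet {ω | g ω = -1} := hg (measurableSet_singleton (-1))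
  have hi1 : Integrable ({ω | g ω = 1}.indicator fun _ => (1 : ℝ)) μ :=
    (integrable_const 1).indicator h1
  have hi2 : Integrable ({ω | g ω = -1}.indicator fun _ => (1 : ℝ)) μ :=
    (integrable_const 1).indicator h2
  have hgeq : g = fun ω => {ω | g ω = 1}.indicator (fun _ => (1 : ℝ)) ω -
      {ω | g ω = -1}.indicator (fun _ => (1 : ℝ)) ω := by
    funext ω
    obtain h | h | h : g ω = -1 ∨ g ω = 0 ∨ g ω = 1 := by simpa using hval ω
    all_goals simp only [indicator_apply, mem_ofPred_eq, h]; norm_num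
  refine ⟨hgeq ▸ hi1.sub hi2, ?_⟩
  rw [congrArg (fun u : Ω → ℝ => ∫ ω, u ω ∂μ) hgeq]
  rw [integral_sub hi1 hi2, integral_indicator_const _ h1, integral_indicator_const _ h2,
    Measure.real, Measure.real, h, sub_self]

/-- Restricting an i.i.d. centred process to the visits to a set of an independent invariant
σ-algebra gives a strong martingale difference sequence. -/
lemma isStrongMDS_indicator {Ω : Type*} {C : MeasurableSpace Ω} [mΩ : MeasurableSpace Ω] {μ : Measure Ω}
    [IsProbabilityMeasure μ] {T : Ω ≃ Ω} (hT : MeasurePreserving T μ μ)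
    (hT' : Measurable T.symm) (hC : C ≤ mΩ)
    (hCinv : ∀ A : Set Ω, MeasurableSet[C] A → MeasurableSet[C] (T ⁻¹' A))
    {g : Ω → ℝ} (hg : Measurable g) (hgi : Integrable g μ) (hg0 : ∫ ω, g ω ∂μ = 0)
    (hgindep : iIndep (fun k : ℤ =>
      MeasurableSpace.comap (fun ω => g (iterZ T k ω)) Real.measurableSpace) μ)
    (hgC : Indep (⨆ k : ℤ,
      MeasurableSpace.comap (fun ω => g (iterZ T k ω)) Real.measurableSpace) C μ)
    {A : Set Ω} (hA : MeasurableSet[C] A) : IsStrongMDS μ T (A.indicator g) := by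
  intro k
  set m : ℤ → MeasurableSpace Ω := fun k =>
    MeasurableSpace.comap (fun ω => g (iterZ T k ω)) Real.measurableSpace
  have hmle : ∀ j, m j ≤ mΩ := fun j =>
    (hg.comp (measurable_iterZ hT.measurable hT' j)).comap_le
  have hAk : ∀ j : ℕ, MeasurableSet[C] (T^[j] ⁻¹' A) := by
    intro j
    induction j with
    | zero => exact hA
    | succ j ih =>
      rw [Function.iterate_succ, preimage_comp]
      exact hCinv _ ih
  have hle : (⨆ j ∈ ({(k : ℤ)}ᶜ : Set ℤ), m j) ≤ mΩ := iSup₂_le fun j _ => hmle j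
  have hind : Indep (m k) (⨆ j ∈ ({(k : ℤ)}ᶜ : Set ℤ), m j) μ := by
    have := indep_iSup_of_disjoint hmle hgindep
      (disjoint_compl_right : Disjoint ({(k : ℤ)} : Set ℤ) {(k : ℤ)}ᶜ)
    rwa [iSup_singleton] at this
  have hind' : Indep (m k ⊔ ⨆ j ∈ ({(k : ℤ)}ᶜ : Set ℤ), m j) C μ :=
    indep_of_indep_of_le_left hgC (sup_le (le_iSup m k) (iSup₂_le fun j _ => le_iSup m j))
  have hcomp : (fun ω => A.indicator g (T^[k] ω)) =
      (T^[k] ⁻¹' A).indicator fun ω => g (T^[k] ω) := rfl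
  rw [hcomp]
  refine condExp_indicator_ae_eq_zero_of_indep (hmle k) (sup_le hle hC) ?_
    (indep_sup_right_of_indep (hmle k) hle hC hind hind')
    (comap_measurable (fun ω => g (iterZ T k ω))) ?_ ?_
    ((le_sup_right : C ≤ _) _ (hAk k))
  · refine iSup₂_le fun j hj => Measurable.comap_le ?_
    have hgj : Measurable[(⨆ j ∈ ({(k : ℤ)}ᶜ : Set ℤ), m j) ⊔ C] fun ω => g (T^[j] ω) := by
      refine (comap_measurable (fun ω => g (iterZ T j ω))).mono ?_ le_rfl
      refine le_sup_of_le_left (le_iSup₂_of_le (j : ℤ) ?_ le_rfl)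
      simpa using hj
    exact hgj.indicator ((le_sup_right : C ≤ _) _ (hAk j))
  · exact (hT.iterate k).integrable_comp_of_integrable hgi
  · rw [← hg0]
    have := (hT.iterate k).map_eq
    conv_rhs => rw [← this]
    rw [integral_map (hT.iterate k).aemeasurable hg.aestronglyMeasurable]
    rfl

/-- Let `T` be an invertible bimeasurable measure-preserving transformation of `(Ω,𝓕,μ)`
admitting independent sub-σ-algebras `𝓑`, `𝓒` with `𝓒` `T`-invariant, a `𝓑`-measurable
`g : Ω → {-1,0,1}` with `μ(g=1) = μ(g=-1) = a/2` whose orbit `(g∘T^k)_{k∈ℤ}` is i.i.d. and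
independent of `𝓒`, and such that `𝓒` contains almost invariant sets of any prescribed
measure `d ∈ (0,1)`. Then for every sequence `(a_n)` of positive reals decreasing to `0`
there is a non-degenerate `{-1,0,1}`-valued strong martingale difference `f` and a strictly
increasing sequence `(n_k)` of positive integers with `μ(S_{n_k}(f) = 0) ≥ a_{n_k}` and
`sup_x |F_{n_k}(f,x) − Φ(x)| ≥ a_{n_k}/2`. -/
theorem stmt1 {Ω : Type*} [mΩ : MeasurableSpace Ω] (μ : Measure Ω) [IsProbabilityMeasure μ]
    (T : Ω ≃ Ω) (hTmeas : Measurable (⇑T)) (hTmeas' : Measurable (⇑T.symm))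
    (hT : MeasurePreserving (⇑T) μ μ)
    (B C : MeasurableSpace Ω) (hB : B ≤ mΩ) (hC : C ≤ mΩ)
    -- (i) 𝓑 and 𝓒 are independent
    (hBC : Indep B C μ)
    -- (ii) 𝓒 is T-invariant
    (hCinv : ∀ A : Set Ω, MeasurableSet[C] A ↔ MeasurableSet[C] ((⇑T) ⁻¹' A))
    -- (iii) a 𝓑-measurable g with i.i.d. orbit independent of 𝓒
    (g : Ω → ℝ) (hgB : Measurable[B] g) (hgval : ∀ ω, g ω ∈ ({-1, 0, 1} : Set ℝ))
    (a0 : ℝ) (ha0 : 0 < a0) (ha0' : a0 ≤ 1)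
    (hg1 : μ {ω | g ω = 1} = ENNReal.ofReal (a0 / 2))
    (hg1' : μ {ω | g ω = -1} = ENNReal.ofReal (a0 / 2))
    (hgindep : iIndep (fun k : ℤ =>
      MeasurableSpace.comap (fun ω => g (iterZ T k ω)) Real.measurableSpace) μ)
    (hgid : ∀ k : ℤ, ∀ s : Set ℝ, MeasurableSet s →
      μ ((fun ω => g (iterZ T k ω)) ⁻¹' s) = μ (g ⁻¹' s))
    (hgC : Indep (⨆ k : ℤ,
      MeasurableSpace.comap (fun ω => g (iterZ T k ω)) Real.measurableSpace) C μ)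
    -- (iv) 𝓒 contains almost invariant sets of any measure d ∈ (0,1)
    (hRokhlin : ∀ ε : ℝ, 0 < ε → ∀ N : ℕ, ∀ d : ℝ, d ∈ Set.Ioo (0 : ℝ) 1 →
      ∃ A : Set Ω, MeasurableSet[C] A ∧ μ A = ENNReal.ofReal d ∧
        ∀ n : ℕ, 1 ≤ n → n ≤ N →
          μ (symmDiff A ((⇑T)^[n] ⁻¹' A)) < ENNReal.ofReal (ε * d))
    (a : ℕ → ℝ) (ha_pos : ∀ n, 0 < a n) (ha_anti : Antitone a)
    (ha_lim : Filter.Tendsto a Filter.atTop (nhds 0)) :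
    ∃ f : Ω → ℝ, Measurable[mΩ] f ∧ (∀ ω, f ω ∈ ({-1, 0, 1} : Set ℝ)) ∧
      (¬ ∃ c : ℝ, f =ᵐ[μ] fun _ => c) ∧
      @IsStrongMDS Ω mΩ μ (⇑T) f ∧
      ∃ n : ℕ → ℕ, StrictMono n ∧ (∀ k, 0 < n k) ∧ ∀ k : ℕ,
        ENNReal.ofReal (a (n k)) ≤ μ {ω | partialSumMDS (⇑T) f (n k) ω = 0} ∧
        a (n k) / 2 ≤ ⨆ x : ℝ, |@Fdist Ω mΩ μ (⇑T) f (n k) x - stdNormalCDF x| := by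
  have hd : ∀ k : ℕ, 0 < (1 / 2 : ℝ) ^ (k + 2) := fun k => by positivity
  obtain ⟨n, hn_mono, hn⟩ : ∃ n : ℕ → ℕ, StrictMono n ∧
      ∀ k, 0 < n k ∧ a (n k) < (1 / 2 : ℝ) ^ (k + 2) / 2 :=
    Filter.extraction_forall_of_eventually' fun k =>
      ((Filter.eventually_gt_atTop 0).and
        (ha_lim.eventually_lt_const (half_pos (hd k)))).exists_forall_of_atTop
  choose A hAC hAμ hAinv using fun k => hRokhlin (1 / (2 * (n k : ℝ)))
    (by have := (hn k).1; positivity) (n k) ((1 / 2 : ℝ) ^ (k + 2))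
    ⟨hd k, pow_lt_one₀ (by norm_num) (by norm_num) (by simp)⟩
  have hg : Measurable[mΩ] g := hgB.mono hB le_rfl
  obtain ⟨hgi, hg0⟩ := integrable_and_integral_eq_zero_of_symmetric (mΩ := mΩ) hg hgval
    (hg1.trans hg1'.symm)
  have hUC : MeasurableSet[C] (⋃ k, A k)ᶜ := (MeasurableSet.iUnion hAC).compl
  have hU : 0 < μ (⋃ k, A k)ᶜ := by
    rw [@prob_compl_eq_one_sub Ω mΩ _ _ _ (hC _ (MeasurableSet.iUnion hAC)), tsub_pos_iff_lt]
    exact (measure_iUnion_le_half (mΩ := mΩ) hAμ).trans_lt (by rw [ENNReal.ofReal_lt_one]; norm_num)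
  have hpos : ∀ c : ℝ, μ {ω | g ω = c} = ENNReal.ofReal (a0 / 2) →
      0 < μ ({ω | g ω = c} ∩ (⋃ k, A k)ᶜ) := by
    intro c hc
    have hgc : MeasurableSet[B] {ω | g ω = c} := hgB (measurableSet_singleton c)
    rw [(Indep_iff B C μ).1 hBC _ _ hgc hUC]
    refine ENNReal.mul_pos ?_ hU.ne'
    rw [hc]
    exact (ENNReal.ofReal_pos.2 (half_pos ha0)).ne'
  have hf : Measurable[mΩ] ((⋃ k, A k)ᶜ.indicator g) := hg.indicator (hC _ hUC)
  have hfval : ∀ ω, (⋃ k, A k)ᶜ.indicator g ω ∈ ({-1, 0, 1} : Set ℝ) := by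
    intro ω
    by_cases hω : ω ∈ (⋃ k, A k)ᶜ
    · rw [indicator_of_mem hω]; exact hgval ω
    · rw [indicator_of_notMem hω]; simp
  refine ⟨(⋃ k, A k)ᶜ.indicator g, hf, hfval, ?_,
    isStrongMDS_indicator (mΩ := mΩ) hT hTmeas' hC (fun A => (hCinv A).1) hg hgi hg0 hgindep hgC hUC,
    n, hn_mono, fun k => (hn k).1, fun k => ?_⟩
  · rintro ⟨c, hc⟩
    have hval : ∀ b : ℝ, μ {ω | g ω = b} = ENNReal.ofReal (a0 / 2) → b = c := by
      intro b hb
      obtain ⟨ω, ⟨hω, hωU⟩, hωc⟩ :=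
        ((frequently_ae_mem_iff.2 (hpos b hb).ne').and_eventually hc).exists
      rw [indicator_of_mem hωU] at hωc
      exact hω.symm.trans hωc
    have := (hval 1 hg1).trans (hval (-1) hg1').symm
    norm_num at this
  · have hatom : ENNReal.ofReal (a (n k)) ≤
        μ {ω | partialSumMDS T ((⋃ k, A k)ᶜ.indicator g) (n k) ω = 0} := by
      refine (ENNReal.ofReal_le_ofReal (hn k).2.le).trans
        ((half_le_measure_iInter_preimage_iterate (mΩ := mΩ) (hn k).1 (hd k) (hAμ k) (hAinv k)).trans
          (measure_mono fun ω hω => ?_))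
      refine Finset.sum_eq_zero fun j hj => indicator_of_notMem ?_ _
      exact fun h => h (mem_iUnion.2 ⟨k, hω j (Finset.mem_range.1 hj)⟩)
    refine ⟨hatom, half_le_iSup_abs_Fdist_sub (mΩ := mΩ) ?_ ?_ (hn k).1 hatom⟩
    · exact Finset.measurable_sum _ fun j _ => hf.comp (hTmeas.iterate j)
    · rw [integral_pos_iff_support_of_nonneg (fun ω => sq_nonneg _)]
      · refine (hpos 1 hg1).trans_le (measure_mono ?_)
        rintro ω ⟨hω, hωU⟩
        rw [mem_ofPred_eq] at hω
        rw [Function.mem_support, indicator_of_mem hωU, hω]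
        norm_num
      · refine Integrable.of_bound (hf.pow_const 2).aestronglyMeasurable 1 (.of_forall fun ω => ?_)
        rcases hfval ω with h | h | h <;> rw [h] <;>
          norm_num
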